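/- arXiv:1108.2885 — 6 statements merged into one kernel-verified Lean document; each statement's English description precedes it below -/
import Mathlib

section
/- Nonstandard characterization of the limit of a sequence: for u : ℕ → ℝ and L : ℝ, the sequence u tends to L (along atTop) if and only if for every hypernatural N that is infinite (i.e. N exceeds the constant germ of every natural number), the hyperreal N.map u has standard part L, i.e. IsSt (Germ.map u N) L. -/
open Filter Hyperreal

/-!
An element of an ultrapower lies above all constants iff it tends to `atTop`, and a hyperreal has
standard part `L` iff it tends to `nhds L`, so both conditions on germs are convergence along the
hyperfilter. If `u` does not converge, some sequence tending to infinity is mapped by `u` outside a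
fixed neighbourhood of the limit at every index. Its germ is then a counterexample, since the
hyperfilter refines `atTop`.
-/

theorem germ_tendsto_atTop_iff_forall_const_lt {α β : Type*} [Preorder β] [NoMaxOrder β]
    {φ : Ultrafilter α} {x : Germ (φ : Filter α) β} :
    x.Tendsto atTop ↔ ∀ b : β, (b : Germ (φ : Filter α) β) < x := by
  induction x using Germ.inductionOn with
  | _ f =>
    have const_lt_coe (b : β) : (b : Germ (φ : Filter α) β) < f ↔ ∀ᶠ a in φ, b < f a :=
      Germ.coe_lt (f := fun _ ↦ b)
    simp only [Germ.coe_tendsto, const_lt_coe]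
    exact ⟨fun hf b ↦ hf.eventually_gt_atTop b,
      fun hf ↦ tendsto_atTop.2 fun b ↦ (hf b).mono fun _ ↦ le_of_lt⟩

theorem germ_tendsto_map {α β γ : Type*} {l : Filter α} {lb : Filter β} {lc : Filter γ}
    {u : β → γ} {x : Germ l β} (hu : Tendsto u lb lc) (hx : x.Tendsto lb) :
    (x.map u).Tendsto lc := by
  induction x using Germ.inductionOn with
  | _ f => exact hu.comp hx

theorem tendsto_iff_forall_germ_tendsto_map {β γ : Type*} {l : Filter ℕ} [l.NeBot]
    (hl : l ≤ atTop) {lb : Filter β} [lb.IsCountablyGenerated] {lc : Filter γ} {u : β → γ} :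
    Tendsto u lb lc ↔ ∀ x : Germ l β, x.Tendsto lb → (x.map u).Tendsto lc := by
  refine ⟨fun hu _ ↦ germ_tendsto_map hu, fun h ↦ ?_⟩
  by_contra hu
  obtain ⟨s, hs, hfreq⟩ := not_tendsto_iff_exists_frequently_notMem.1 hu
  obtain ⟨f, hf, hfs⟩ := exists_seq_forall_of_frequently hfreq
  have huf : Tendsto (u ∘ f) l lc := h f (hf.mono_left hl)
  obtain ⟨k, hk⟩ := (huf.eventually_mem hs).exists
  exact hfs k hk

theorem tendsto_iff_isSt_map_infinite_hypernat_general {β : Type*} [Preorder β] [NoMaxOrder β]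
    [(atTop : Filter β).IsCountablyGenerated] (u : β → ℝ) (L : ℝ) :
    Tendsto u atTop (nhds L) ↔
      ∀ x : Germ (hyperfilter ℕ : Filter ℕ) β,
        (∀ b : β, (b : Germ (hyperfilter ℕ : Filter ℕ) β) < x) → IsSt (Germ.map u x : ℝ*) L :=
  (tendsto_iff_forall_germ_tendsto_map Nat.hyperfilter_le_atTop).trans <|
    forall_congr' fun _ ↦
      imp_congr germ_tendsto_atTop_iff_forall_const_lt isSt_iff_tendsto.symm

theorem tendsto_iff_isSt_map_infinite_hypernat (u : ℕ → ℝ) (L : ℝ) :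
    Filter.Tendsto u Filter.atTop (nhds L) ↔
      ∀ N : Filter.Germ (Filter.hyperfilter ℕ : Filter ℕ) ℕ,
        (∀ n : ℕ, (n : Filter.Germ (Filter.hyperfilter ℕ : Filter ℕ) ℕ) < N) →
        IsSt (Filter.Germ.map u N : ℝ*) L :=
  tendsto_iff_isSt_map_infinite_hypernat_general u L
end

section
/- Nonstandard characterization of the derivative: for f : ℝ → ℝ, x L : ℝ, one has HasDerivAt f L x if and only if for every nonzero infinitesimal hyperreal ε, the quotient (f*(x + ε) − f(x)) / ε has standard part L, i.e. IsSt ((Germ.map f (↑x + ε) − ↑(f x)) / ε) L. -/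
/-!
Every germ along the hyperfilter is represented by a sequence, so evaluating a limit on germs
tending to the source filter is composition of limits. Conversely, if the limit fails at a countably
generated filter, some member of the target filter is avoided along an ordinary convergent sequence;
the hyperfilter is finer than `atTop`, so this sequence gives a hyperreal counterexample.
Applied to the difference quotient at the punctured neighbourhoods of `0`, whose germs are the
nonzero infinitesimals, this is the derivative criterion.
-/

open Filter Hyperreal

open Topology

section Germ

variable {α β ι : Type*}

lemma tendsto_iff_forall_germ_tendsto {F : Filter ℕ} [F.NeBot] (hF : F ≤ atTop) {g : α → β}
    {k : Filter α} [k.IsCountablyGenerated] {l : Filter β} :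
    Tendsto g k l ↔ ∀ y : Germ F α, y.Tendsto k → (y.map g).Tendsto l := by
  constructor
  · intro hg y hy
    induction y using Germ.inductionOn with
    | _ u => exact hg.comp hy
  · intro h
    by_contra hg
    obtain ⟨s, hs, hfreq⟩ := not_tendsto_iff_exists_frequently_notMem.1 hg
    obtain ⟨u, hu, hus⟩ := exists_seq_forall_of_frequently hfreq
    have hlim : Tendsto (g ∘ u) F l := h u (hu.mono_left hF)
    obtain ⟨n, hn⟩ := (hlim.eventually_mem hs).exists
    exact hus n hn

lemma germ_tendsto_nhdsNE_iff [TopologicalSpace α] {U : Ultrafilter ι}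
    {y : Germ (U : Filter ι) α} {a : α} :
    y.Tendsto (𝓝[≠] a) ↔ y ≠ ↑a ∧ y.Tendsto (𝓝 a) := by
  induction y using Germ.inductionOn with
  | _ u =>
    have hne : (u : Germ (U : Filter ι) α) ≠ ↑a ↔ ∀ᶠ i in U, u i ≠ a :=
      Germ.coe_eq.not.trans Ultrafilter.eventually_not.symm
    rw [hne, and_comm]
    exact tendsto_nhdsWithin_iff

lemma tendsto_nhdsNE_iff_forall_germ_tendsto [TopologicalSpace α] [FirstCountableTopology α]
    {U : Ultrafilter ℕ} (hU : (U : Filter ℕ) ≤ atTop) {g : α → β} {a : α} {l : Filter β} :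
    Tendsto g (𝓝[≠] a) l ↔
      ∀ y : Germ (U : Filter ℕ) α, y ≠ ↑a → y.Tendsto (𝓝 a) → (y.map g).Tendsto l := by
  simp only [tendsto_iff_forall_germ_tendsto hU, germ_tendsto_nhdsNE_iff, and_imp]

lemma germ_map_difference_quotient {K : Type*} [DivisionRing K] {F : Filter ι} (f : K → K) (x : K)
    (dx : Germ F K) :
    dx.map (fun t ↦ (f (x + t) - f x) / t) =
      (((x : Germ F K) + dx).map f - (f x : Germ F K)) / dx := by
  induction dx using Germ.inductionOn with
  | _ u => rfl

end Germ

theorem hasDerivAt_iff_isSt_quotient (f : ℝ → ℝ) (x L : ℝ) :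
    HasDerivAt f L x ↔
      ∀ dx : ℝ*, dx ≠ 0 → Infinitesimal dx →
        IsSt (Sub.sub (α := ℝ*) (Filter.Germ.map f ((x : ℝ*) + dx)) ((f x : ℝ) : ℝ*) / dx) L := by
  have hlim : HasDerivAt f L x ↔ Tendsto (fun t ↦ (f (x + t) - f x) / t) (𝓝[≠] 0) (𝓝 L) := by
    simp only [hasDerivAt_iff_tendsto_slope_zero, smul_eq_mul, div_eq_inv_mul]
  rw [hlim, tendsto_nhdsNE_iff_forall_germ_tendsto Nat.hyperfilter_le_atTop]
  refine forall_congr' fun dx ↦ imp_congr_right fun _ ↦ imp_congr isSt_iff_tendsto.symm ?_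
  rw [germ_map_difference_quotient]
  exact isSt_iff_tendsto.symm
end

section
/- Cauchy's example of an infinitesimal of order 0: for the function g(i) = (log i)⁻¹, (a) for every real r < 0, g(i)/i^r tends to 0 as i → 0⁺, and (b) for every real r > 0, |g(i)|/i^r tends to +∞ as i → 0⁺ (with i ^ r denoting Real.rpow). -/
/-!
Everything reduces to `log x * x ^ r`, the reciprocal of `(log x)⁻¹ / x ^ r`. As `x → 0⁺` it tends
to `-∞` for `r ≤ 0`, since there `x ^ r ≥ 1`, and it tends to `0` through negative values for
`r > 0`, since powers dominate the logarithm.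
-/

open Filter Real

open scoped Topology

section LogRpow

variable {r : ℝ}

theorem tendsto_log_mul_rpow_nhdsGT_zero_atBot (hr : r ≤ 0) :
    Tendsto (fun x : ℝ => log x * x ^ r) (𝓝[>] 0) atBot := by
  refine tendsto_atBot_mono' _ ?_ tendsto_log_nhdsGT_zero
  filter_upwards [Ioo_mem_nhdsGT one_pos] with x ⟨hx0, hx1⟩
  have one_le_rpow : 1 ≤ x ^ r := one_le_rpow_of_pos_of_le_one_of_nonpos hx0 hx1.le hr
  exact mul_le_of_one_le_right (log_neg hx0 hx1).le one_le_rpow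

theorem tendsto_log_mul_rpow_nhdsGT_zero_nhdsLT_zero (hr : 0 < r) :
    Tendsto (fun x : ℝ => log x * x ^ r) (𝓝[>] 0) (𝓝[<] 0) := by
  refine tendsto_nhdsWithin_iff.2 ⟨tendsto_log_mul_rpow_nhdsGT_zero hr, ?_⟩
  filter_upwards [Ioo_mem_nhdsGT one_pos] with x ⟨hx0, hx1⟩
  exact mul_neg_of_neg_of_pos (log_neg hx0 hx1) (rpow_pos_of_pos hx0 r)

theorem tendsto_inv_log_div_rpow_nhdsGT_zero (hr : r ≤ 0) :
    Tendsto (fun x : ℝ => (log x)⁻¹ / x ^ r) (𝓝[>] 0) (𝓝 0) :=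
  (tendsto_log_mul_rpow_nhdsGT_zero_atBot hr).inv_tendsto_atBot.congr fun x => by
    rw [Pi.inv_apply, inv_div_left, mul_comm]

theorem tendsto_inv_log_div_rpow_nhdsGT_zero_atBot (hr : 0 < r) :
    Tendsto (fun x : ℝ => (log x)⁻¹ / x ^ r) (𝓝[>] 0) atBot :=
  (tendsto_log_mul_rpow_nhdsGT_zero_nhdsLT_zero hr).inv_tendsto_nhdsLT_zero.congr fun x => by
    rw [Pi.inv_apply, inv_div_left, mul_comm]

theorem tendsto_abs_inv_log_div_rpow_nhdsGT_zero_atTop (hr : 0 < r) :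
    Tendsto (fun x : ℝ => |(log x)⁻¹| / x ^ r) (𝓝[>] 0) atTop := by
  refine (tendsto_abs_atBot_atTop.comp
    (tendsto_inv_log_div_rpow_nhdsGT_zero_atBot hr)).congr' ?_
  filter_upwards [self_mem_nhdsWithin] with x hx
  rw [Function.comp_apply, abs_div, abs_of_pos (rpow_pos_of_pos hx r)]

end LogRpow

theorem inv_log_infinitesimal_order_zero (r : ℝ) :
    (r < 0 → Filter.Tendsto (fun i : ℝ => (Real.log i)⁻¹ / i ^ r)
        (nhdsWithin 0 (Set.Ioi 0)) (nhds 0)) ∧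
    (0 < r → Filter.Tendsto (fun i : ℝ => |(Real.log i)⁻¹| / i ^ r)
        (nhdsWithin 0 (Set.Ioi 0)) Filter.atTop) :=
  ⟨fun hr => tendsto_inv_log_div_rpow_nhdsGT_zero hr.le,
    tendsto_abs_inv_log_div_rpow_nhdsGT_zero_atTop⟩
end

section
/- The Cauchy order of a product is the sum of the orders: let f, g : ℝ → ℝ and a, b : ℝ. Assume for all r < a, f(i)/i^r → 0 as i → 0⁺ and for all r > a, |f(i)/i^r| → +∞; and assume for all r < b, g(i)/i^r → 0 and for all r > b, |g(i)/i^r| → +∞. Then for all r < a + b, f(i)·g(i)/i^r → 0 as i → 0⁺, and for all r > a + b, |f(i)·g(i)/i^r| → +∞ as i → 0⁺. -/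
/-!
Split the exponent: every `r` on one side of `a + b` is a sum `s + t` with `s` and `t` on the same
side of `a` and `b` respectively, and since `x ^ (s + t) = x ^ s * x ^ t` for `x > 0`, the rescaled
product is the product of the rescaled factors. Hence it tends to `0` below `a + b`, and its norm
tends to infinity above.
-/

open Filter Real

section SplitExponent

variable {G : Type*} [AddCommGroup G] [PartialOrder G] [IsOrderedAddMonoid G] [DenselyOrdered G]
  {a b r : G}

theorem exists_lt_lt_add_eq (h : r < a + b) : ∃ s < a, ∃ t < b, s + t = r := by
  obtain ⟨s, hs, hsa⟩ := exists_between (sub_lt_iff_lt_add.2 h)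
  exact ⟨s, hsa, r - s, sub_lt_comm.1 hs, add_sub_cancel s r⟩

theorem exists_gt_gt_add_eq (h : a + b < r) : ∃ s > a, ∃ t > b, s + t = r :=
  exists_lt_lt_add_eq (G := Gᵒᵈ) h

end SplitExponent

section Rescaling

variable {ι A : Type*} {l : Filter ι} {u : ι → ℝ} {f g : ι → A} {s t : ℝ}

theorem inv_rpow_smul_mul_inv_rpow_smul [Semiring A] [Algebra ℝ A] {x : ℝ} (hx : 0 < x)
    (s t : ℝ) (y z : A) :
    (x ^ s)⁻¹ • y * (x ^ t)⁻¹ • z = (x ^ (s + t))⁻¹ • (y * z) := by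
  rw [smul_mul_smul_comm, ← mul_inv, ← rpow_add hx]

theorem tendsto_inv_rpow_smul_mul_zero [Semiring A] [Algebra ℝ A] [TopologicalSpace A]
    [ContinuousMul A] (hu : ∀ᶠ i in l, 0 < u i)
    (hf : Tendsto (fun i ↦ (u i ^ s)⁻¹ • f i) l (nhds 0))
    (hg : Tendsto (fun i ↦ (u i ^ t)⁻¹ • g i) l (nhds 0)) :
    Tendsto (fun i ↦ (u i ^ (s + t))⁻¹ • (f i * g i)) l (nhds 0) := by
  have hfg := hf.mul hg
  rw [mul_zero] at hfg
  refine hfg.congr' ?_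
  filter_upwards [hu] with i hi using inv_rpow_smul_mul_inv_rpow_smul hi s t (f i) (g i)

theorem tendsto_norm_inv_rpow_smul_mul_atTop [SeminormedRing A] [NormMulClass A]
    [NormedAlgebra ℝ A] (hu : ∀ᶠ i in l, 0 < u i)
    (hf : Tendsto (fun i ↦ ‖(u i ^ s)⁻¹ • f i‖) l atTop)
    (hg : Tendsto (fun i ↦ ‖(u i ^ t)⁻¹ • g i‖) l atTop) :
    Tendsto (fun i ↦ ‖(u i ^ (s + t))⁻¹ • (f i * g i)‖) l atTop := by
  refine (hf.atTop_mul_atTop₀ hg).congr' ?_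
  filter_upwards [hu] with i hi
  rw [← norm_mul, inv_rpow_smul_mul_inv_rpow_smul hi]

end Rescaling

section CauchyOrder

variable {ι A : Type*} [SeminormedRing A] [NormedAlgebra ℝ A]
  {l : Filter ι} {u : ι → ℝ} {a b : ℝ}

/-- Cauchy's notion of an infinitesimal `f` of order `a` with respect to the base `u` along the
filter `l`, for `f` with values in a real normed algebra. "Unbounded" is read as divergence of the
norm to infinity, and the quotient by `u i ^ r` is written as scaling by its inverse. -/
structure HasCauchyOrder (l : Filter ι) (u : ι → ℝ) (f : ι → A) (a : ℝ) : Prop where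
  tendsto_zero : ∀ r < a, Tendsto (fun i ↦ (u i ^ r)⁻¹ • f i) l (nhds 0)
  tendsto_norm_atTop : ∀ r > a, Tendsto (fun i ↦ ‖(u i ^ r)⁻¹ • f i‖) l atTop

theorem hasCauchyOrder_iff_div {f : ι → ℝ} :
    HasCauchyOrder l u f a ↔
      (∀ r < a, Tendsto (fun i ↦ f i / u i ^ r) l (nhds 0)) ∧
        ∀ r > a, Tendsto (fun i ↦ |f i / u i ^ r|) l atTop := by
  have inv_smul_eq_div (r : ℝ) (i : ι) : (u i ^ r)⁻¹ • f i = f i / u i ^ r :=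
    inv_mul_eq_div (u i ^ r) (f i)
  simp only [← inv_smul_eq_div, ← norm_eq_abs]
  exact ⟨fun h ↦ ⟨h.tendsto_zero, h.tendsto_norm_atTop⟩, fun h ↦ ⟨h.1, h.2⟩⟩

theorem cauchy_order_mul_general [NormMulClass A] {f g : ι → A} (hu : ∀ᶠ i in l, 0 < u i)
    (hf : HasCauchyOrder l u f a) (hg : HasCauchyOrder l u g b) :
    HasCauchyOrder l u (fun i ↦ f i * g i) (a + b) where
  tendsto_zero r hr := by
    obtain ⟨s, hs, t, ht, rfl⟩ := exists_lt_lt_add_eq hr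
    exact tendsto_inv_rpow_smul_mul_zero hu (hf.tendsto_zero s hs) (hg.tendsto_zero t ht)
  tendsto_norm_atTop r hr := by
    obtain ⟨s, hs, t, ht, rfl⟩ := exists_gt_gt_add_eq hr
    exact tendsto_norm_inv_rpow_smul_mul_atTop hu (hf.tendsto_norm_atTop s hs)
      (hg.tendsto_norm_atTop t ht)

end CauchyOrder

theorem cauchy_order_mul (f g : ℝ → ℝ) (a b : ℝ)
    (hf1 : ∀ r : ℝ, r < a → Filter.Tendsto (fun i : ℝ => f i / i ^ r)
      (nhdsWithin 0 (Set.Ioi 0)) (nhds 0))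
    (hf2 : ∀ r : ℝ, a < r → Filter.Tendsto (fun i : ℝ => |f i / i ^ r|)
      (nhdsWithin 0 (Set.Ioi 0)) Filter.atTop)
    (hg1 : ∀ r : ℝ, r < b → Filter.Tendsto (fun i : ℝ => g i / i ^ r)
      (nhdsWithin 0 (Set.Ioi 0)) (nhds 0))
    (hg2 : ∀ r : ℝ, b < r → Filter.Tendsto (fun i : ℝ => |g i / i ^ r|)
      (nhdsWithin 0 (Set.Ioi 0)) Filter.atTop) :
    (∀ r : ℝ, r < a + b → Filter.Tendsto (fun i : ℝ => f i * g i / i ^ r)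
      (nhdsWithin 0 (Set.Ioi 0)) (nhds 0)) ∧
    (∀ r : ℝ, a + b < r → Filter.Tendsto (fun i : ℝ => |f i * g i / i ^ r|)
      (nhdsWithin 0 (Set.Ioi 0)) Filter.atTop) := by
  exact hasCauchyOrder_iff_div.1 <| cauchy_order_mul_general self_mem_nhdsWithin
    (hasCauchyOrder_iff_div.2 ⟨hf1, hf2⟩) (hasCauchyOrder_iff_div.2 ⟨hg1, hg2⟩)
end

section
/- Mean value theorem over arbitrary hyperreal intervals (the Klein–Fraenkel criterion, satisfied by transfer): let f, f' : ℝ → ℝ with HasDerivAt f (f' x) x for every real x. Then for all hyperreals a < b there exists a hyperreal c with a < c and c < b such that f*(b) − f*(a) = (f')*(c) · (b − a), where f* = Germ.map f and (f')* = Germ.map f'. -/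
open Filter Hyperreal

/-!
An inequality or an equation between germs says that it holds between representatives at almost
every index. The real mean value theorem supplies an intermediate point at each such index, and
the germ of the chosen intermediate points is the required `c`. Length plays no role, so
infinitesimal and infinite intervals need no separate treatment.
-/

lemma germ_liftPred_of_forall {ι β : Type*} {l : Filter ι} {p : β → Prop} (hp : ∀ x, p x)
    (a : Germ l β) : a.LiftPred p :=
  a.inductionOn fun u => Eventually.of_forall fun i => hp (u i)

lemma germ_liftRel_lt_iff {ι β : Type*} [Preorder β] {φ : Ultrafilter ι}
    {a b : Germ (φ : Filter ι) β} : a.LiftRel (· < ·) b ↔ a < b := by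
  rw [← Germ.lt_def]

lemma exists_mem_Ioo_sub_eq_hasDerivAt_mul_sub {f f' : ℝ → ℝ} {s : Set ℝ}
    (hs : s.OrdConnected) (hfc : ContinuousOn f s)
    (hff' : ∀ x ∈ interior s, HasDerivAt f (f' x) x)
    {u v : ℝ} (hu : u ∈ s) (hv : v ∈ s) (huv : u < v) :
    ∃ w ∈ Set.Ioo u v, f v - f u = f' w * (v - u) := by
  have hIcc : Set.Icc u v ⊆ s := hs.out hu hv
  have hIoo : Set.Ioo u v ⊆ interior s :=
    interior_maximal (Set.Ioo_subset_Icc_self.trans hIcc) isOpen_Ioo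
  obtain ⟨w, hw, hslope⟩ := exists_hasDerivAt_eq_slope f f' huv (hfc.mono hIcc)
    fun x hx => hff' x (hIoo hx)
  exact ⟨w, hw, ((eq_div_iff (sub_pos.2 huv).ne').1 hslope).symm⟩

-- Over a filter that is not an ultrafilter, `a < b` only says `a ≤ b ∧ ¬ b ≤ a`, which allows
-- equality of representatives on a non-negligible set of indices; hence `LiftRel (· < ·)`.
theorem hyperreal_mean_value_theorem_general {ι : Type*} {l : Filter ι} {f f' : ℝ → ℝ}
    {s : Set ℝ} (hs : s.OrdConnected) (hfc : ContinuousOn f s)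
    (hff' : ∀ x ∈ interior s, HasDerivAt f (f' x) x)
    {a b : Germ l ℝ} (ha : a.LiftPred (· ∈ s)) (hb : b.LiftPred (· ∈ s))
    (hab : a.LiftRel (· < ·) b) :
    ∃ c : Germ l ℝ, a.LiftRel (· < ·) c ∧ c.LiftRel (· < ·) b ∧
      b.map f - a.map f = c.map f' * (b - a) := by
  induction a, b using Germ.inductionOn₂ with | _ u v
  rw [Germ.liftPred_coe] at ha hb
  rw [Germ.liftRel_coe] at hab
  have hpointwise : ∀ᶠ i in l, ∃ w ∈ Set.Ioo (u i) (v i),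
      f (v i) - f (u i) = f' w * (v i - u i) := by
    filter_upwards [ha, hb, hab] with i hu hv huv
    exact exists_mem_Ioo_sub_eq_hasDerivAt_mul_sub hs hfc hff' hu hv huv
  obtain ⟨w, hw⟩ := skolem.1 hpointwise
  exact ⟨w, hw.mono fun _ h => h.1.1, hw.mono fun _ h => h.1.2,
    Germ.coe_eq.2 (hw.mono fun _ h => h.2)⟩

theorem hyperreal_mean_value_theorem (f f' : ℝ → ℝ)
    (hf : ∀ x : ℝ, HasDerivAt f (f' x) x) :
    ∀ a b : ℝ*, a < b → ∃ c : ℝ*, a < c ∧ c < b ∧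
      Filter.Germ.map f b - Filter.Germ.map f a =
        Mul.mul (α := ℝ*) (Filter.Germ.map f' c) (b - a) := by
  intro a b hab
  obtain ⟨c, hac, hcb, hc⟩ := hyperreal_mean_value_theorem_general Set.ordConnected_univ
    (fun x _ => (hf x).continuousAt.continuousWithinAt) (fun x _ => hf x)
    (germ_liftPred_of_forall Set.mem_univ a) (germ_liftPred_of_forall Set.mem_univ b)
    (germ_liftRel_lt_iff.2 hab)
  exact ⟨c, germ_liftRel_lt_iff.1 hac, germ_liftRel_lt_iff.1 hcb, hc⟩
end

section
/- Every polynomial of odd degree over the hyperreals has a root: for every polynomial p over ℝ* with natDegree p odd, there exists x : ℝ* with p.eval x = 0. -/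
open Hyperreal

/-!
A polynomial over an ultrapower of `R` is represented by a family of polynomials over `R`, almost
all of which have the same degree as the given one. If this degree is odd and odd-degree polynomials
over `R` have roots, then choosing a root of each member of the family gives a root in the
ultrapower. The hyperreals are an ultrapower of `ℝ`, where the intermediate value theorem applies.
-/

open Filter Polynomial

section RealPolynomials

theorem tendsto_eval_atBot_atBot_of_odd_natDegree {𝕜 : Type*} [NormedField 𝕜] [LinearOrder 𝕜]
    [IsStrictOrderedRing 𝕜] [OrderTopology 𝕜] {p : 𝕜[X]} (hp : Odd p.natDegree)
    (hlead : 0 ≤ p.leadingCoeff) : Tendsto p.eval atBot atBot := by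
  have hdeg : 0 < (p.comp (-X)).degree := by
    rw [← natDegree_pos_iff_degree_pos, natDegree_comp, natDegree_neg, natDegree_X, mul_one]
    exact hp.pos
  have hlead' : (p.comp (-X)).leadingCoeff ≤ 0 := by
    simpa only [comp_neg_X_leadingCoeff_eq, hp.neg_one_pow, neg_one_mul, neg_nonpos] using hlead
  simpa only [Function.comp_def, eval_comp, eval_neg, eval_X, neg_neg] using
    ((p.comp (-X)).tendsto_atBot_of_leadingCoeff_nonpos hdeg hlead').comp tendsto_neg_atBot_atTop

theorem surjective_eval_of_odd_natDegree {p : ℝ[X]} (hp : Odd p.natDegree) :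
    Function.Surjective p.eval := by
  wlog hlead : 0 ≤ p.leadingCoeff generalizing p
  · intro y
    have hlead_neg : 0 ≤ (-p).leadingCoeff := by
      rw [leadingCoeff_neg]
      exact neg_nonneg.2 (not_le.1 hlead).le
    obtain ⟨x, hx⟩ := this (p := -p) (by rwa [natDegree_neg]) hlead_neg (-y)
    exact ⟨x, by simpa only [eval_neg, neg_inj] using hx⟩
  exact p.continuous.surjective
    (p.tendsto_atTop_of_leadingCoeff_nonneg (natDegree_pos_iff_degree_pos.1 hp.pos) hlead)
    (tendsto_eval_atBot_atBot_of_odd_natDegree hp hlead)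

end RealPolynomials

section GermPolynomials

variable {α R : Type*}

theorem eventually_apply_eq_zero_iff_germ_eq_zero [Zero R] (φ : Ultrafilter α) (f : α → R) :
    ∀ᶠ a in φ, f a = 0 ↔ (f : Germ (φ : Filter α) R) = 0 := by
  have hf : (f : Germ (φ : Filter α) R) = 0 ↔ ∀ᶠ a in φ, f a = 0 := Germ.coe_eq
  by_cases h : (f : Germ (φ : Filter α) R) = 0
  · simpa only [h, iff_true] using hf.1 h
  · simpa only [h, iff_false] using Ultrafilter.eventually_not.2 (mt hf.2 h)

variable [Semiring R]

theorem eventually_support_map_evalRingHom_eq (φ : Ultrafilter α) (q : (α → R)[X]) :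
    ∀ᶠ a in φ, (q.map (Pi.evalRingHom (fun _ ↦ R) a)).support =
      (q.map (Germ.coeRingHom (φ : Filter α))).support := by
  have hcoeff : ∀ᶠ a in φ, ∀ i ∈ q.support,
      q.coeff i a = 0 ↔ Germ.coeRingHom (φ : Filter α) (q.coeff i) = 0 :=
    q.support.eventually_all.2 fun i _ ↦
      eventually_apply_eq_zero_iff_germ_eq_zero φ (q.coeff i)
  filter_upwards [hcoeff] with a ha
  ext i
  by_cases hi : i ∈ q.support
  · simpa only [mem_support_iff, coeff_map, Pi.evalRingHom_apply] using not_congr (ha i hi)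
  · exact iff_of_false (mt (support_map_subset _ q ·) hi) (mt (support_map_subset _ q ·) hi)

theorem eventually_natDegree_map_evalRingHom_eq (φ : Ultrafilter α) (q : (α → R)[X]) :
    ∀ᶠ a in φ, (q.map (Pi.evalRingHom (fun _ ↦ R) a)).natDegree =
      (q.map (Germ.coeRingHom (φ : Filter α))).natDegree :=
  (eventually_support_map_evalRingHom_eq φ q).mono fun a ha ↦ by
    simp only [natDegree, degree, ha]

theorem exists_eval_map_coeRingHom_eq_zero {l : Filter α} {q : (α → R)[X]}
    (hq : ∀ᶠ a in l, ∃ x, (q.map (Pi.evalRingHom (fun _ ↦ R) a)).eval x = 0) :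
    ∃ x, (q.map (Germ.coeRingHom l)).eval x = 0 := by
  choose! x hx using fun a
    (ha : ∃ x, (q.map (Pi.evalRingHom (fun _ ↦ R) a)).eval x = 0) ↦ ha
  have heval : ∀ᶠ a in l, q.eval x a = 0 := hq.mono fun a ha ↦
    (eval_map_apply (Pi.evalRingHom (fun _ ↦ R) a) x).symm.trans (hx a ha)
  refine ⟨Germ.coeRingHom l x, ?_⟩
  rw [eval_map_apply]
  exact Germ.coe_eq.2 heval

theorem hyperreal_odd_degree_polynomial_has_root_general (φ : Ultrafilter α)
    (hR : ∀ q : R[X], Odd q.natDegree → ∃ x, q.eval x = 0)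
    (p : (Germ (φ : Filter α) R)[X]) (hp : Odd p.natDegree) : ∃ x, p.eval x = 0 := by
  obtain ⟨q, rfl⟩ := map_surjective (Germ.coeRingHom (φ : Filter α)) Quot.mk_surjective p
  apply exists_eval_map_coeRingHom_eq_zero
  filter_upwards [eventually_natDegree_map_evalRingHom_eq φ q] with a ha
  exact hR _ (ha ▸ hp)

end GermPolynomials

theorem hyperreal_odd_degree_polynomial_has_root (p : Polynomial ℝ*)
    (hp : Odd p.natDegree) : ∃ x : ℝ*, p.eval x = 0 :=
  hyperreal_odd_degree_polynomial_has_root_general (hyperfilter ℕ)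
    (fun _ hq ↦ surjective_eval_of_odd_natDegree hq 0) p hp
end
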